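/- For every element g of the wreath product G(r,n) = ℤ_r ≀ S_n, the sum of the values at g of all irreducible complex characters of G(r,n) equals the number of absolute square roots of g, i.e. ∑_{χ ∈ Irr(G(r,n))} χ(g) = #{ v ∈ G(r,n) : v · v̄ = g }. -/

import Mathlib

open Finset CategoryTheory

/-- The wreath product `ℤ_r ≀ S_n`: elements are pairs `(σ, z)` with
`σ` a permutation of `{1,…,n}` and `z ∈ (ℤ/rℤ)^n`.  The multiplication is
`(σ,c)·(τ,d) = (στ, (c_{τ⁻¹(i)} + d_i)_i)`, where in the paper's convention
permutations compose left-to-right; translated to Lean's convention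
(`(σ * τ) x = σ (τ x)`) this reads `(σ,c)·(τ,d) = (σ * τ, fun i => c (τ i) + d i)`,
i.e. the semidirect product of `Fin n → ZMod r` by `Equiv.Perm (Fin n)`
acting by permuting coordinates. -/
def Wreath (r n : ℕ) : Type := Equiv.Perm (Fin n) × (Fin n → ZMod r)

namespace Wreath

variable {r n : ℕ}

instance : Group (Wreath r n) where
  mul v w := ⟨v.1 * w.1, fun i => v.2 (w.1 i) + w.2 i⟩
  one := ⟨1, 0⟩
  inv v := ⟨v.1⁻¹, fun i => -v.2 (v.1⁻¹ i)⟩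
  mul_assoc a b c := Prod.ext (mul_assoc _ _ _) (funext fun i => add_assoc _ _ _)
  one_mul a := by
    refine Prod.ext (one_mul _) (funext fun i => ?_)
    show (0 : Fin n → ZMod r) (a.1 i) + a.2 i = a.2 i
    simp
  mul_one a := by
    refine Prod.ext (mul_one _) (funext fun i => ?_)
    show a.2 ((1 : Equiv.Perm (Fin n)) i) + (0 : Fin n → ZMod r) i = a.2 i
    simp
  inv_mul_cancel a := by
    refine Prod.ext (inv_mul_cancel _) (funext fun i => ?_)
    show -a.2 (a.1⁻¹ (a.1 i)) + a.2 i = (0 : Fin n → ZMod r) i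
    simp

instance [NeZero r] : Fintype (Wreath r n) :=
  inferInstanceAs (Fintype (Equiv.Perm (Fin n) × (Fin n → ZMod r)))

instance : DecidableEq (Wreath r n) :=
  inferInstanceAs (DecidableEq (Equiv.Perm (Fin n) × (Fin n → ZMod r)))

theorem mul_def (v w : Wreath r n) :
    v * w = ⟨v.1 * w.1, fun i => v.2 (w.1 i) + w.2 i⟩ := rfl

theorem one_def : (1 : Wreath r n) = ⟨1, 0⟩ := rfl

theorem inv_def (v : Wreath r n) : v⁻¹ = ⟨v.1⁻¹, fun i => -v.2 (v.1⁻¹ i)⟩ := rfl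

/-- The bar operation `(σ, z) ↦ (σ, −z)`. -/
def bar (v : Wreath r n) : Wreath r n := ⟨v.1, -v.2⟩

theorem bar_mul (v w : Wreath r n) : bar (v * w) = bar v * bar w := by
  refine Prod.ext rfl (funext fun i => ?_)
  show -(v.2 (w.1 i) + w.2 i) = -v.2 (w.1 i) + -w.2 i
  ring

theorem bar_bar (v : Wreath r n) : bar (bar v) = v := by
  refine Prod.ext rfl ?_
  show - - v.2 = v.2
  simp

/-- `bar` as a group automorphism. -/
def barAut : Wreath r n ≃* Wreath r n where
  toFun := bar
  invFun := bar
  left_inv := bar_bar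
  right_inv := bar_bar
  map_mul' := bar_mul

theorem bar_inv (v : Wreath r n) : bar v⁻¹ = (bar v)⁻¹ :=
  map_inv (barAut : Wreath r n ≃* Wreath r n) v

/-- `vᵗ := (v̄)⁻¹`. -/
def tr (v : Wreath r n) : Wreath r n := (bar v)⁻¹

/-- Conjugation `w ↦ π w πᵗ` maps absolute involutions to absolute involutions. -/
theorem conj_absInv {w : Wreath r n} (hw : w * bar w = 1) (π : Wreath r n) :
    (π * w * tr π) * bar (π * w * tr π) = 1 := by
  have h1 : bar (π * w * tr π) = bar π * bar w * π⁻¹ := by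
    rw [bar_mul, bar_mul, tr, bar_inv, bar_bar]
  calc (π * w * tr π) * bar (π * w * tr π)
      = π * (w * bar w) * π⁻¹ := by rw [h1, tr]; group
    _ = 1 := by rw [hw]; group

end Wreath

/-- The set of inversions of `σ`, encoded as ordered pairs `(i,j)` with `i < j`
and `σ j < σ i` (one representative for each unordered pair `{i,j}` with
`(j−i)(σ(j)−σ(i)) < 0`). -/
def invPairs {n : ℕ} (σ : Equiv.Perm (Fin n)) : Finset (Fin n × Fin n) :=
  Finset.univ.filter fun p => p.1 < p.2 ∧ σ p.2 < σ p.1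

/-- The 2-cycles of an involution `u`, encoded as ordered pairs `(i,j)` with `i < j`,
`u i = j` and `u j = i` (one representative for each unordered pair `{i,j}`). -/
def pairSet {n : ℕ} (u : Equiv.Perm (Fin n)) : Finset (Fin n × Fin n) :=
  Finset.univ.filter fun p => p.1 < p.2 ∧ u p.1 = p.2 ∧ u p.2 = p.1

/-- `sign_o(π,w) := (−1)^{#(Inv(|π|) ∩ Pair(|w|))}`. -/
def signO {r n : ℕ} (π w : Wreath r n) : ℤ :=
  (-1) ^ ((invPairs π.1 ∩ pairSet w.1).card)

/-- A family of finite-dimensional complex representations forming a complete set of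
pairwise non-isomorphic irreducible representations of `G`. -/
def IsCompleteIrrFamily {G : Type} [Monoid G] {ι : Type} (V : ι → FDRep ℂ G) : Prop :=
  (∀ i, Simple (V i)) ∧ (∀ i j, Nonempty (V i ≅ V j) → i = j) ∧
    ∀ W : FDRep ℂ G, Simple W → ∃ i, Nonempty (V i ≅ W)

/-!
For an involutive automorphism `τ` of a finite group `G`, the number of `v` with `v * τ v = g` is a
class function of `g`, and its coefficient at an irreducible character `χ` is the twisted
Frobenius–Schur indicator `|G|⁻¹ ∑ v, χ (v * τ v)`. If every `g` is conjugate to `(τ g)⁻¹`, then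
`χ ∘ τ` is the character dual to `χ`, and the indicator is `1` as soon as all bilinear forms `B`
with `B (g x) (τ g y) = B x y` on the representation are symmetric, that is, none but `0` is
alternating.

For the bar operation on `ℤ_r ≀ S_n` this last property follows by induction on `n`. An element `l`
conjugating `g` to `(bar g)⁻¹` can be chosen in the copy of `ℤ_r ≀ S_{n-1}` that fixes a point and
its colour. Averaging over this subgroup shows that every operator commuting with it is self-adjoint
for `B`, in particular the projection `p` onto an irreducible constituent `W` of the restriction. If
`B` is alternating, it vanishes on `W` by induction, so `B w y = B (p w) y = B w (p y) = 0` for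
`w ∈ W`, which puts `W` in the radical of `B`.
-/

section Representations

open Representation

universe u v w

variable {k : Type w} {V : Type*} [Field k] [AddCommGroup V] [Module k V]

theorem asAlgebraHom_surjective_of_isIrreducible {G : Type*} [Monoid G] [IsAlgClosed k]
    [FiniteDimensional k V] (ρ : Representation k G V) [IsIrreducible ρ] :
    Function.Surjective (asAlgebraHom ρ) := by
  classical
  intro Y
  have scalar (f : Module.End (MonoidAlgebra k G) ρ.asModule) :
      ∃ c : k, ∀ x : V, f x = c • x := by
    obtain ⟨c, rfl⟩ := (IsSimpleModule.algebraMap_end_bijective_of_isAlgClosed k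
      (A := MonoidAlgebra k G) (V := ρ.asModule)).2 f
    exact ⟨c, fun x => rfl⟩
  let Y' : Module.End (Module.End (MonoidAlgebra k G) ρ.asModule) ρ.asModule :=
    { toFun := fun x => Y x
      map_add' := map_add Y
      map_smul' := fun f x => by
        obtain ⟨c, hc⟩ := scalar f
        exact (congrArg Y (hc x)).trans ((map_smul Y c x).trans (hc (Y x)).symm) }
  let b := Module.finBasis k V
  obtain ⟨a, ha⟩ := jacobson_density Y' (univ.image b)
  exact ⟨a, b.ext fun i => (ha (b i) (mem_image_of_mem _ (mem_univ _))).symm⟩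

/-- A bilinear form on a representation `ρ` that is invariant when its second argument is acted on
through the endomorphism `τ` of the group; it amounts to a homomorphism from `ρ ∘ τ` to the dual
of `ρ`. -/
def IsTwistedInvariant {G : Type*} [Monoid G] (τ : G →* G) (ρ : Representation k G V)
    (B : LinearMap.BilinForm k V) : Prop :=
  ∀ g x y, B (ρ g x) (ρ (τ g) y) = B x y

namespace IsTwistedInvariant

variable {G : Type*} [Group G] {τ : G →* G} {ρ : Representation k G V}
  {B : LinearMap.BilinForm k V}

theorem apply_left (hB : IsTwistedInvariant τ ρ B) (g : G) (x y : V) :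
    B (ρ g x) y = B x (ρ (τ g)⁻¹ y) := by
  rw [← hB g x, self_inv_apply]

theorem flip (hB : IsTwistedInvariant τ ρ B) (hτ : Function.Involutive τ) :
    IsTwistedInvariant τ ρ (LinearMap.flip B) := fun g x y => by
  simpa only [LinearMap.flip_apply, hτ g] using hB (τ g) y x

theorem sub {C : LinearMap.BilinForm k V} (hB : IsTwistedInvariant τ ρ B)
    (hC : IsTwistedInvariant τ ρ C) : IsTwistedInvariant τ ρ (B - C) := fun g x y => by
  simp only [LinearMap.sub_apply, hB g, hC g]

theorem eq_zero_of_apply_eq_zero [IsIrreducible ρ] (hB : IsTwistedInvariant τ ρ B) {v : V}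
    (hv : v ≠ 0) (hBv : B v = 0) : B = 0 := by
  let K : Subrepresentation ρ :=
    ⟨LinearMap.ker B, fun g x hx => LinearMap.ext fun y => by
      rw [hB.apply_left, LinearMap.mem_ker.1 hx, LinearMap.zero_apply, LinearMap.zero_apply]⟩
  have hvK : v ∈ K := hBv
  have hK : K ≠ ⊥ := by
    intro h
    rw [h] at hvK
    exact hv hvK
  have hKtop : K = ⊤ := (eq_bot_or_eq_top K).resolve_left hK
  exact LinearMap.ker_eq_top.1 (congrArg Subrepresentation.toSubmodule hKtop)

variable {L : Type*} [Group L] {τ' : L →* L} {φ : L →* G}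

theorem sum_conj_selfAdjoint [Fintype L] (hB : IsTwistedInvariant τ ρ B)
    (hτ' : Function.Bijective τ') (hφ : ∀ l, φ (τ' l) = τ (φ l))
    (hconj : ∀ g, ∃ l, φ l * g * (φ l)⁻¹ = (τ g)⁻¹) (g : G) (x y : V) :
    B (∑ l, ρ (φ l * g * (φ l)⁻¹) x) y = B x (∑ l, ρ (φ l * g * (φ l)⁻¹) y) := by
  obtain ⟨m, hm⟩ := hconj g
  have adjoint (l : L) : (τ (φ l * g * (φ l)⁻¹))⁻¹ = φ (τ' l * m) * g * (φ (τ' l * m))⁻¹ := by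
    simp only [map_mul, map_inv, mul_inv_rev, inv_inv, hφ, ← hm, mul_assoc]
  simp only [map_sum, LinearMap.sum_apply, hB.apply_left, adjoint]
  exact Fintype.sum_bijective (fun l => τ' l * m) ((Group.mulRight_bijective m).comp hτ') _ _
    fun l => rfl

variable [IsAlgClosed k] [FiniteDimensional k V] [IsIrreducible ρ]

theorem sum_conj_apply_selfAdjoint [Fintype L] (hB : IsTwistedInvariant τ ρ B)
    (hτ' : Function.Bijective τ') (hφ : ∀ l, φ (τ' l) = τ (φ l))
    (hconj : ∀ g, ∃ l, φ l * g * (φ l)⁻¹ = (τ g)⁻¹) (Y : Module.End k V) (x y : V) :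
    B ((∑ l, ρ (φ l) * Y * ρ (φ l)⁻¹) x) y = B x ((∑ l, ρ (φ l) * Y * ρ (φ l)⁻¹) y) := by
  obtain ⟨a, rfl⟩ := asAlgebraHom_surjective_of_isIrreducible ρ Y
  induction a using MonoidAlgebra.induction_linear with
  | zero => simp
  | add a b ha hb =>
    simp only [map_add, mul_add, add_mul, sum_add_distrib, LinearMap.add_apply, ha, hb]
  | single g c =>
    simp only [asAlgebraHom_single, mul_smul_comm, smul_mul_assoc, ← map_mul, ← smul_sum, map_smul,
      LinearMap.smul_apply, LinearMap.sum_apply, hB.sum_conj_selfAdjoint hτ' hφ hconj]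

theorem commutant_selfAdjoint [Finite L] [NeZero (Nat.card L : k)]
    (hB : IsTwistedInvariant τ ρ B) (hτ' : Function.Bijective τ')
    (hφ : ∀ l, φ (τ' l) = τ (φ l)) (hconj : ∀ g, ∃ l, φ l * g * (φ l)⁻¹ = (τ g)⁻¹)
    {Y : Module.End k V} (hY : ∀ l, Commute (ρ (φ l)) Y) (x y : V) :
    B (Y x) y = B x (Y y) := by
  have := Fintype.ofFinite L
  have average : ∑ l, ρ (φ l) * Y * ρ (φ l)⁻¹ = (Nat.card L : k) • Y := by
    simp only [(hY _).eq, mul_assoc, ← map_mul, mul_inv_cancel, map_one, mul_one, sum_const,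
      card_univ, Nat.cast_smul_eq_nsmul, Nat.card_eq_fintype_card]
  have card_ne_zero : (Nat.card L : k) ≠ 0 := NeZero.ne _
  have h := hB.sum_conj_apply_selfAdjoint hτ' hφ hconj Y x y
  simpa only [average, LinearMap.smul_apply, map_smul, smul_eq_mul, mul_right_inj' card_ne_zero]
    using h

end IsTwistedInvariant

/-- Every twisted-invariant alternating form on an irreducible finite-dimensional representation
vanishes, so that no twisted Frobenius–Schur indicator can be `-1`. -/
def AlternatingInvariantsVanish (k : Type w) [Field k] {G : Type*} [Group G] (τ : G →* G) : Prop :=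
  ∀ (V : Type u) [AddCommGroup V] [Module k V] [FiniteDimensional k V] (ρ : Representation k G V)
    [IsIrreducible ρ] (B : LinearMap.BilinForm k V),
    IsTwistedInvariant τ ρ B → B.IsAlt → B = 0

theorem nontrivial_of_isIrreducible {G : Type*} [Monoid G] (ρ : Representation k G V)
    [IsIrreducible ρ] : Nontrivial V :=
  IsSimpleModule.nontrivial (MonoidAlgebra k G) ρ.asModule

theorem alternatingInvariantsVanish_of_subsingleton [IsAlgClosed k] {G : Type*} [Group G]
    [Subsingleton G] (τ : G →* G) : AlternatingInvariantsVanish.{u} k τ := by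
  intro V _ _ _ ρ _ B _ hB
  have : IsMulCommutative G := ⟨⟨fun _ _ => Subsingleton.elim _ _⟩⟩
  obtain ⟨v, -, hv⟩ := finrank_eq_one_iff'.1 (IsIrreducible.finrank_eq_one_of_isMulCommutative ρ)
  ext x y
  obtain ⟨a, rfl⟩ := hv x
  obtain ⟨b, rfl⟩ := hv y
  simp only [map_smul, LinearMap.smul_apply, hB v, smul_zero, LinearMap.zero_apply]

theorem isIrreducible_toRepresentation_of_isAtom {G : Type*} [Monoid G] {ρ : Representation k G V}
    {σ : Subrepresentation ρ} (hσ : IsAtom σ) : IsIrreducible σ.toRepresentation := by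
  let image (π : Subrepresentation σ.toRepresentation) : Subrepresentation ρ :=
    ⟨π.toSubmodule.map σ.toSubmodule.subtype, by
      rintro g _ ⟨x, hx, rfl⟩
      exact ⟨_, π.apply_mem_toSubmodule g hx, rfl⟩⟩
  have image_injective : Function.Injective image := fun π₁ π₂ h =>
    Subrepresentation.toSubmodule_injective <|
      Submodule.map_injective_of_injective σ.toSubmodule.subtype_injective <|
        congrArg Subrepresentation.toSubmodule h
  have image_bot : image ⊥ = ⊥ := Subrepresentation.toSubmodule_injective (Submodule.map_bot _)
  have image_top : image ⊤ = σ :=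
    Subrepresentation.toSubmodule_injective (Submodule.map_subtype_top _)
  exact
    { exists_pair_ne := ⟨⊥, ⊤, fun h => hσ.1 <| by rw [← image_top, ← h, image_bot]⟩
      eq_bot_or_eq_top := fun π => by
        have image_le : image π ≤ σ := Submodule.map_subtype_le σ.toSubmodule π.toSubmodule
        exact (hσ.le_iff.1 image_le).imp (fun h => image_injective (h.trans image_bot.symm))
          fun h => image_injective (h.trans image_top.symm) }

theorem exists_isAtom_subrepresentation_projection {G : Type*} [Group G] [Finite G]
    [NeZero (Nat.card G : k)] [Nontrivial V] (ρ : Representation k G V) :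
    ∃ (σ : Subrepresentation ρ) (p : IntertwiningMap ρ ρ), IsAtom σ ∧
      (∀ x, p x ∈ σ) ∧ ∀ x ∈ σ, p x = x := by
  have : Nontrivial ρ.asModule := ‹Nontrivial V›
  obtain ⟨m, hm⟩ := IsSemisimpleModule.exists_simple_submodule (MonoidAlgebra k G) ρ.asModule
  obtain ⟨m', hm'⟩ := exists_isCompl m
  let e := Subrepresentation.subrepresentationSubmoduleOrderIso (ρ := ρ)
  refine ⟨e.symm m,
    (IntertwiningMap.equivLinearMapAsModule ρ ρ).symm (Submodule.projection m m' hm'), ?_, ?_, ?_⟩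
  · exact (e.symm.isAtom_iff m).2 (isSimpleModule_iff_isAtom.1 hm)
  · exact fun x => Submodule.projection_apply_mem hm' x
  · exact fun x hx => Submodule.projection_apply_left hm' ⟨x, hx⟩

theorem isIrreducible_of_finrank_intertwiningMap_eq_one {G : Type*} [Group G] [Finite G]
    [NeZero (Nat.card G : k)] {ρ : Representation k G V}
    (h : Module.finrank k (IntertwiningMap ρ ρ) = 1) : IsIrreducible ρ := by
  have : Nontrivial (IntertwiningMap ρ ρ) := Module.nontrivial_of_finrank_pos (R := k) (by omega)
  have : Nontrivial V := by
    by_contra hV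
    have := not_nontrivial_iff_subsingleton.1 hV
    exact one_ne_zero (α := IntertwiningMap ρ ρ) (by ext x; exact Subsingleton.elim _ _)
  obtain ⟨σ, p, hσ, hrange, hfix⟩ := exists_isAtom_subrepresentation_projection ρ
  obtain ⟨c, rfl⟩ := (finrank_eq_one_iff_of_nonzero' (1 : IntertwiningMap ρ ρ) one_ne_zero).1 h p
  have hc : c ≠ 0 := by
    rintro rfl
    refine hσ.1 (eq_bot_iff.2 fun x hx => ?_)
    rw [← hfix x hx, zero_smul]
    exact rfl
  have σ_eq_top : σ = ⊤ := eq_top_iff.2 fun x _ => by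
    have h := hrange (c⁻¹ • x)
    rwa [IntertwiningMap.smul_apply, IntertwiningMap.coe_one, id, smul_inv_smul₀ hc] at h
  exact isSimpleOrder_iff_isAtom_top.2 (σ_eq_top ▸ hσ)

theorem AlternatingInvariantsVanish.of_hom [IsAlgClosed k] {G L : Type*} [Group G] [Group L]
    [Finite L] [NeZero (Nat.card L : k)] {τ : G →* G} {τ' : L →* L} {φ : L →* G}
    (hL : AlternatingInvariantsVanish.{u} k τ') (hτ' : Function.Bijective τ')
    (hφ : ∀ l, φ (τ' l) = τ (φ l)) (hconj : ∀ g, ∃ l, φ l * g * (φ l)⁻¹ = (τ g)⁻¹) :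
    AlternatingInvariantsVanish.{u} k τ := by
  intro V _ _ _ ρ _ B hB hAlt
  have : Nontrivial V := nontrivial_of_isIrreducible ρ
  obtain ⟨σ, p, hσ, hrange, hfix⟩ := exists_isAtom_subrepresentation_projection (ρ.comp φ)
  have hcomm (l : L) : Commute (ρ (φ l)) p.toLinearMap := (p.isIntertwining' l).symm
  have hBσ : B.restrict σ.toSubmodule = 0 := by
    have := isIrreducible_toRepresentation_of_isAtom hσ
    refine hL _ σ.toRepresentation _ (fun l x y => ?_) fun x => hAlt x
    have h := hB (φ l) x y
    rw [← hφ] at h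
    exact h
  obtain ⟨v, hvσ, hv⟩ := σ.toSubmodule.exists_mem_ne_zero_of_ne_bot fun h =>
    hσ.1 (Subrepresentation.toSubmodule_injective h)
  refine hB.eq_zero_of_apply_eq_zero hv (LinearMap.ext fun y => ?_)
  calc B v y = B (p v) y := by rw [hfix v hvσ]
    _ = B v (p y) := hB.commutant_selfAdjoint hτ' hφ hconj hcomm v y
    _ = 0 := LinearMap.congr_fun₂ hBσ ⟨v, hvσ⟩ ⟨p y, hrange y⟩

theorem IsTwistedInvariant.apply_comm {G : Type*} [Group G] {τ : G →* G}
    {V : Type u} [AddCommGroup V] [Module k V] [FiniteDimensional k V] {ρ : Representation k G V}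
    [IsIrreducible ρ] {B : LinearMap.BilinForm k V} (hB : IsTwistedInvariant τ ρ B)
    (h : AlternatingInvariantsVanish.{u} k τ) (hτ : Function.Involutive τ) (x y : V) :
    B x y = B y x := by
  have alternating : (B - LinearMap.flip B).IsAlt := fun z => sub_self (B z z)
  have sub_flip : B - LinearMap.flip B = 0 := h V ρ _ (hB.sub (hB.flip hτ)) alternating
  exact sub_eq_zero.1 (LinearMap.congr_fun₂ sub_flip x y)

theorem isTwistedInvariant_sum_compl₁₂ {G : Type*} [Group G] [Fintype G] (τ : G →* G)
    (ρ : Representation k G V) (B : LinearMap.BilinForm k V) :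
    IsTwistedInvariant τ ρ (∑ g, B.compl₁₂ (ρ g) (ρ (τ g))) := fun h x y => by
  simp only [LinearMap.sum_apply, LinearMap.compl₁₂_apply, ← Module.End.mul_apply, ← map_mul]
  exact Fintype.sum_bijective (· * h) (Group.mulRight_bijective h) _ _ fun g => rfl

/-- The twisted Frobenius–Schur indicator of Kawanaka and Matsuyama, the coefficient of a character
in the function counting the solutions of `v * τ v = g`; for `τ = id` it is the ordinary one. -/
noncomputable def twistedIndicator {G : Type*} [Group G] [Fintype G] (τ : G →* G)
    (ρ : Representation k G V) : k :=
  (Nat.card G : k)⁻¹ * ∑ g, ρ.character (g * τ g)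

theorem character_eq_sum_coord {G ι : Type*} [Monoid G] [Fintype ι] (b : Module.Basis ι k V)
    (ρ : Representation k G V) (g : G) : ρ.character g = ∑ i, b.coord i (ρ g (b i)) := by
  classical
  simp only [character, LinearMap.trace_eq_matrix_trace k b, Matrix.trace, Matrix.diag_apply,
    LinearMap.toMatrix_apply, Module.Basis.coord_apply]

theorem character_mul_eq_sum_coord {G ι : Type*} [Monoid G] [Fintype ι] (b : Module.Basis ι k V)
    (ρ : Representation k G V) (g h : G) :
    ρ.character (g * h) = ∑ i, ∑ j, b.coord i (ρ g (b j)) * b.coord j (ρ h (b i)) := by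
  classical
  simp only [character, map_mul, LinearMap.trace_eq_matrix_trace k b, LinearMap.toMatrix_mul,
    Matrix.trace, Matrix.diag_apply, Matrix.mul_apply, LinearMap.toMatrix_apply,
    Module.Basis.coord_apply]

theorem sum_character_mul_twist_eq {G : Type*} [Group G] [Fintype G] {τ : G →* G}
    (hτ : Function.Involutive τ) (h : AlternatingInvariantsVanish.{u} k τ)
    {V : Type u} [AddCommGroup V] [Module k V] [FiniteDimensional k V] (ρ : Representation k G V)
    [IsIrreducible ρ] :
    ∑ g, ρ.character (g * τ g) = ∑ g, ρ.character g * ρ.character (τ g) := by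
  let b := Module.finBasis k V
  have symmetric (α β : Module.Dual k V) (x y : V) :
      ∑ g, α (ρ g x) * β (ρ (τ g) y) = ∑ g, α (ρ g y) * β (ρ (τ g) x) := by
    have invariant := isTwistedInvariant_sum_compl₁₂ τ ρ (LinearMap.BilinForm.linMulLin α β)
    simpa only [LinearMap.sum_apply, LinearMap.compl₁₂_apply, LinearMap.BilinForm.linMulLin_apply]
      using invariant.apply_comm h hτ x y
  calc ∑ g, ρ.character (g * τ g)
      = ∑ i, ∑ j, ∑ g, b.coord i (ρ g (b j)) * b.coord j (ρ (τ g) (b i)) := by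
        simp only [character_mul_eq_sum_coord b]
        rw [sum_comm]
        exact sum_congr rfl fun i _ => sum_comm
    _ = ∑ i, ∑ j, ∑ g, b.coord i (ρ g (b i)) * b.coord j (ρ (τ g) (b j)) := by
        exact sum_congr rfl fun i _ => sum_congr rfl fun j _ =>
          symmetric (b.coord i) (b.coord j) (b j) (b i)
    _ = ∑ g, ρ.character g * ρ.character (τ g) := by
        simp only [character_eq_sum_coord b, sum_mul_sum]
        rw [sum_comm (s := (univ : Finset G))]
        exact sum_congr rfl fun i _ => sum_comm.symm

theorem twistedIndicator_eq_one [IsAlgClosed k] {G : Type*} [Group G] [Fintype G]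
    [NeZero (Nat.card G : k)] {τ : G →* G} (hτ : Function.Involutive τ)
    (hconj : ∀ g, IsConj g (τ g)⁻¹) (h : AlternatingInvariantsVanish.{u} k τ)
    {V : Type u} [AddCommGroup V] [Module k V] [FiniteDimensional k V] (ρ : Representation k G V)
    [IsIrreducible ρ] : twistedIndicator τ ρ = 1 := by
  have := invertibleOfNonzero (NeZero.ne (Nat.card G : k))
  have char_twist (g : G) : ρ.character (τ g) = ρ.character g⁻¹ := by
    obtain ⟨c, hc⟩ := isConj_iff.1 (hconj g⁻¹)
    rw [← char_conj ρ g⁻¹ c, hc, map_inv, inv_inv]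
  simp only [twistedIndicator, sum_character_mul_twist_eq hτ h, char_twist,
    card_inv_mul_sum_char_mul_char_eq_finrank, IsIrreducible.finrank_intertwiningMap_self,
    Nat.cast_one]

section ClassFunctions

variable {G : Type v} [Group G] [Fintype G] {f : G → k}

theorem sum_smul_inv_comm (hf : ∀ g h, f (h * g * h⁻¹) = f g) (ρ : Representation k G V) (h : G) :
    (∑ g, f g • ρ g⁻¹) ∘ₗ ρ h = ρ h ∘ₗ ∑ g, f g • ρ g⁻¹ := by
  simp only [← Module.End.mul_eq_comp, sum_mul, mul_sum, smul_mul_assoc, mul_smul_comm, ← map_mul]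
  refine Fintype.sum_equiv (MulAut.conj h⁻¹).toEquiv _ _ fun g => ?_
  have hfg : f (h⁻¹ * g * h) = f g := by simpa only [inv_inv] using hf g h⁻¹
  simp only [MulEquiv.toEquiv_eq_coe, EquivLike.coe_coe, MulAut.conj_apply, inv_inv, hfg,
    mul_inv_rev]
  group

theorem sum_smul_inv_eq_zero_of_isIrreducible [IsAlgClosed k] [CharZero k]
    (hf : ∀ g h, f (h * g * h⁻¹) = f g) [FiniteDimensional k V] (ρ : Representation k G V)
    [IsIrreducible ρ] (horth : ∑ g, f g * ρ.character g⁻¹ = 0) : ∑ g, f g • ρ g⁻¹ = 0 := by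
  have := nontrivial_of_isIrreducible ρ
  obtain ⟨c, hc⟩ := IsIrreducible.algebraMap_intertwiningMap_bijective_of_isAlgClosed (ρ := ρ).2
    ⟨_, sum_smul_inv_comm hf ρ⟩
  have scalar : ∑ g, f g • ρ g⁻¹ = c • LinearMap.id :=
    (congrArg IntertwiningMap.toLinearMap hc).symm
  have trace_eq : LinearMap.trace k V (∑ g, f g • ρ g⁻¹) = 0 := by
    simpa only [map_sum, map_smul, smul_eq_mul] using! horth
  rw [scalar, map_smul, LinearMap.trace_id, smul_eq_mul] at trace_eq
  have finrank_ne_zero : (Module.finrank k V : k) ≠ 0 := Nat.cast_ne_zero.2 Module.finrank_pos.ne'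
  rw [scalar, (mul_eq_zero.1 trace_eq).resolve_right finrank_ne_zero, zero_smul]

theorem sum_smul_inv_eq_zero [IsAlgClosed k] [CharZero k] (hf : ∀ g h, f (h * g * h⁻¹) = f g)
    {V : Type u} [AddCommGroup V] [Module k V] [FiniteDimensional k V]
    (horth : ∀ (W : Type u) [AddCommGroup W] [Module k W] [FiniteDimensional k W]
      (σ : Representation k G W) [IsIrreducible σ], ∑ g, f g * σ.character g⁻¹ = 0)
    (ρ : Representation k G V) : ∑ g, f g • ρ g⁻¹ = 0 := by
  let Y : IntertwiningMap ρ ρ := ⟨_, sum_smul_inv_comm hf ρ⟩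
  let e := Subrepresentation.subrepresentationSubmoduleOrderIso (ρ := ρ)
  have simple_le_ker (m : Submodule (MonoidAlgebra k G) ρ.asModule)
      (hm : IsSimpleModule (MonoidAlgebra k G) m) :
      m ≤ LinearMap.ker (IntertwiningMap.equivLinearMapAsModule ρ ρ Y) := by
    have : IsIrreducible (e.symm m).toRepresentation :=
      isIrreducible_toRepresentation_of_isAtom <|
        (e.symm.isAtom_iff m).2 (isSimpleModule_iff_isAtom.1 hm)
    have sum_eq_zero :=
      sum_smul_inv_eq_zero_of_isIrreducible hf _ (horth _ (e.symm m).toRepresentation)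
    intro x hx
    calc Y x
        = ((∑ g, f g • (e.symm m).toRepresentation g⁻¹) ⟨x, hx⟩ : (e.symm m).toSubmodule) := by
          simp only [LinearMap.sum_apply, LinearMap.smul_apply, AddSubmonoidClass.coe_finsetSum]
          exact LinearMap.sum_apply _ _ _
      _ = 0 := by rw [sum_eq_zero]; rfl
  have ker_eq_top : LinearMap.ker (IntertwiningMap.equivLinearMapAsModule ρ ρ Y) = ⊤ :=
    top_unique (IsSemisimpleModule.sSup_simples_eq_top (MonoidAlgebra k G) ρ.asModule ▸
      sSup_le simple_le_ker)
  exact LinearMap.ext fun x => LinearMap.congr_fun (LinearMap.ker_eq_top.1 ker_eq_top) x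

theorem classFunction_eq_zero [IsAlgClosed k] [CharZero k] (hf : ∀ g h, f (h * g * h⁻¹) = f g)
    (horth : ∀ (W : Type max v w) [AddCommGroup W] [Module k W] [FiniteDimensional k W]
      (σ : Representation k G W) [IsIrreducible σ], ∑ g, f g * σ.character g⁻¹ = 0) : f = 0 := by
  classical
  have h := LinearMap.congr_fun (sum_smul_inv_eq_zero hf horth (ofMulAction k G G))
    (MonoidAlgebra.single 1 1)
  funext g
  have := congrArg (fun z => MonoidAlgebra.coeff z g⁻¹) h
  simpa [Finsupp.single_apply] using this

end ClassFunctions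

theorem simple_iff_isIrreducible {k G : Type u} [Field k] [IsAlgClosed k] [CharZero k] [Group G]
    [Finite G] (V : FDRep k G) : Simple V ↔ IsIrreducible V.ρ := by
  have := Fintype.ofFinite G
  have := invertibleOfNonzero (NeZero.ne (Nat.card G : k))
  have finrank_eq : Module.finrank k (V ⟶ V) = Module.finrank k (IntertwiningMap V.ρ V.ρ) := by
    rw [← Nat.cast_inj (R := k), ← FDRep.scalar_product_char_eq_finrank_equivariant,
      ← card_inv_mul_sum_char_mul_char_eq_finrank]
    rfl
  rw [FDRep.simple_iff_end_is_rank_one, finrank_eq]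
  exact ⟨isIrreducible_of_finrank_intertwiningMap_eq_one,
    fun _ => IsIrreducible.finrank_intertwiningMap_self V.ρ⟩

end Representations

section Reversal

open Equiv MulAction

theorem inv_smul_eq_of_smul_eq {A X : Type*} [Group A] [IsMulCommutative A] [MulAction A X]
    {a b : A} {x : X} (h : a • x = b • x) : a⁻¹ • x = b⁻¹ • x := by
  rw [inv_smul_eq_iff, smul_smul, mul_comm', mul_smul, h, inv_smul_smul]

-- Each orbit becomes a quotient group of `A` once a base point is chosen, and `θ` is inversion in
-- it; the base point of the orbit of `x₀` has to be `x₀` itself.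
theorem exists_perm_smul_eq_inv_smul (A : Type*) {X : Type*} [Group A] [IsMulCommutative A]
    [MulAction A X] (x₀ : X) :
    ∃ θ : Perm X, θ x₀ = x₀ ∧ ∀ (a : A) (x : X), θ (a • x) = a⁻¹ • θ x := by
  classical
  let rep (x : X) : X :=
    Function.update Quotient.out (Quotient.mk (orbitRel A X) x₀) x₀ (Quotient.mk (orbitRel A X) x)
  have rep_smul (a : A) (x : X) : rep (a • x) = rep x := by
    simp only [rep, Quotient.sound (s := orbitRel A X) ⟨a, rfl⟩]
  have rep_self : rep x₀ = x₀ := Function.update_self _ _ _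
  have mem_orbit (x : X) : ∃ a : A, a • rep x = x := by
    by_cases hx : Quotient.mk (orbitRel A X) x = Quotient.mk (orbitRel A X) x₀
    · simpa only [rep, hx, Function.update_self] using! Quotient.exact hx
    · simpa only [rep, Function.update_of_ne hx] using!
        (orbitRel A X).symm (Quotient.exact (Quotient.out_eq (Quotient.mk (orbitRel A X) x)))
  choose a ha using mem_orbit
  let θ (x : X) : X := (a x)⁻¹ • rep x
  have θ_smul_rep (b : A) (x : X) : θ (b • rep x) = b⁻¹ • rep x := by
    have rep_eq : rep (b • rep x) = rep x := by rw [rep_smul, ← rep_smul (a x), ha]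
    have h := ha (b • rep x)
    simp only [θ, rep_eq] at h ⊢
    exact inv_smul_eq_of_smul_eq h
  have θ_involutive : Function.Involutive θ := fun x => by
    rw [show θ x = (a x)⁻¹ • rep x from rfl, θ_smul_rep, inv_inv, ha]
  refine ⟨θ_involutive.toPerm, ?_, fun b x => ?_⟩
  · simpa only [one_smul, inv_one, rep_self] using! θ_smul_rep 1 x₀
  · have h := θ_smul_rep (b * a x) x
    rwa [mul_smul, ha, mul_inv_rev, mul_comm', mul_smul] at h

theorem exists_perm_apply_eq_inv_apply {X : Type*} {S : Set (Perm X)}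
    (hS : ∀ s ∈ S, ∀ t ∈ S, s * t = t * s) (x₀ : X) :
    ∃ θ : Perm X, θ x₀ = x₀ ∧ ∀ s ∈ S, ∀ x, θ (s x) = s⁻¹ (θ x) := by
  have := Subgroup.isMulCommutative_closure hS
  obtain ⟨θ, hθ, hθS⟩ := exists_perm_smul_eq_inv_smul (Subgroup.closure S) x₀
  exact ⟨θ, hθ, fun s hs x => hθS ⟨s, Subgroup.subset_closure hs⟩ x⟩

end Reversal

namespace Wreath

section

universe u

open Equiv

variable {r n : ℕ}

theorem tr_eq (g : Wreath r n) : tr g = ⟨g.1⁻¹, fun i => g.2 (g.1⁻¹ i)⟩ :=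
  Prod.ext rfl (funext fun i => neg_neg (g.2 (g.1⁻¹ i)))

/-- The permutation of the coloured points `Fin n × ZMod r` defined by an element of `ℤ_r ≀ S_n`;
the permutations arising in this way are those commuting with all shifts of the colour.
In this picture a conjugation of `g` to `tr g` corresponds to a permutation that conjugates `g` and
all the shifts to their inverses. -/
def toPermColoured (g : Wreath r n) : Perm (Fin n × ZMod r) :=
  prodShear g.1 fun i => Equiv.addLeft (g.2 i)

theorem exists_coloured_reversal (g : Wreath r n) (a : Fin n) :
    ∃ θ : Perm (Fin n × ZMod r), θ (a, 0) = (a, 0) ∧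
      (∀ i c, θ (i, c) = ((θ (i, 0)).1, -c + (θ (i, 0)).2)) ∧
      ∀ x, θ (g.toPermColoured x) = g.toPermColoured⁻¹ (θ x) := by
  let shift (c : ZMod r) : Perm (Fin n × ZMod r) := prodCongr (Equiv.refl _) (Equiv.addLeft c)
  have toPerm_shift (c : ZMod r) : g.toPermColoured * shift c = shift c * g.toPermColoured :=
    Equiv.ext fun x => Prod.ext rfl (add_left_comm _ _ _)
  have shift_shift (c d : ZMod r) : shift c * shift d = shift d * shift c :=
    Equiv.ext fun x => Prod.ext rfl (add_left_comm _ _ _)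
  have commute : ∀ s ∈ insert g.toPermColoured (Set.range shift),
      ∀ t ∈ insert g.toPermColoured (Set.range shift), s * t = t * s := by
    rintro _ (rfl | ⟨c, rfl⟩) _ (rfl | ⟨d, rfl⟩)
    exacts [rfl, toPerm_shift d, (toPerm_shift c).symm, shift_shift c d]
  obtain ⟨θ, hθ, hθ_inv⟩ := exists_perm_apply_eq_inv_apply commute (a, 0)
  refine ⟨θ, hθ, fun i c => ?_, hθ_inv _ (Set.mem_insert _ _)⟩
  simpa [shift, Perm.inv_def] using! hθ_inv (shift c) (Set.mem_insert_of_mem _ ⟨c, rfl⟩) (i, 0)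

theorem exists_conj_eq_tr (g : Wreath r n) (a : Fin n) :
    ∃ h : Wreath r n, h * g * h⁻¹ = tr g ∧ h.1 a = a ∧ h.2 a = 0 := by
  obtain ⟨θ, hθ, θ_apply, hθg⟩ := exists_coloured_reversal g a
  have injective : Function.Injective fun i => (θ (i, 0)).1 := fun i j hij => by
    have h : θ (i, (θ (i, 0)).2) = θ (j, (θ (j, 0)).2) := by
      rw [θ_apply, θ_apply j, neg_add_cancel, neg_add_cancel]
      exact Prod.ext hij rfl
    exact congrArg Prod.fst (θ.injective h)
  let h : Wreath r n :=
    ⟨Equiv.ofBijective _ (Finite.injective_iff_bijective.1 injective), fun i => -(θ (i, 0)).2⟩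
  have reverse (i : Fin n) : θ (g.1 i, g.2 i) =
      (g.1⁻¹ (θ (i, 0)).1, -g.2 (g.1⁻¹ (θ (i, 0)).1) + (θ (i, 0)).2) := by
    simpa [toPermColoured, Perm.inv_def] using hθg (i, 0)
  simp only [θ_apply (g.1 _) (g.2 _), Prod.mk.injEq] at reverse
  refine ⟨h, ?_, congrArg Prod.fst hθ, neg_eq_zero.2 (congrArg Prod.snd hθ)⟩
  rw [mul_inv_eq_iff_eq_mul, tr_eq]
  refine Prod.ext (Equiv.ext fun i => (reverse i).1) (funext fun i => ?_)
  change -(θ (g.1 i, 0)).2 + g.2 i = g.2 (g.1⁻¹ (θ (i, 0)).1) + -(θ (i, 0)).2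
  linear_combination -(reverse i).2

/-- The inclusion of `ℤ_r ≀ S_n` into `ℤ_r ≀ S_{n+1}` as the subgroup fixing the point `0` and its
colour, along which properties are transferred by induction on `n`. -/
def succHom (r n : ℕ) : Wreath r n →* Wreath r (n + 1) where
  toFun g := ⟨Perm.decomposeFin.symm (0, g.1), Fin.cons 0 g.2⟩
  map_one' := Prod.ext ((Perm.decomposeFin_symm_of_one 0).trans (swap_self 0)) Matrix.cons_zero_zero
  map_mul' g h := by
    refine Prod.ext (Equiv.ext fun i => ?_) (funext fun i => ?_)
    · change Perm.decomposeFin.symm (0, g.1 * h.1) i =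
        Perm.decomposeFin.symm (0, g.1) (Perm.decomposeFin.symm (0, h.1) i)
      cases i using Fin.cases <;> simp
    · change (Fin.cons 0 (fun i => g.2 (h.1 i) + h.2 i) : Fin (n + 1) → ZMod r) i =
        (Fin.cons 0 g.2 : Fin (n + 1) → ZMod r) (Perm.decomposeFin.symm (0, h.1) i) +
          (Fin.cons 0 h.2 : Fin (n + 1) → ZMod r) i
      cases i using Fin.cases <;> simp

theorem succHom_bar (g : Wreath r n) : succHom r n (bar g) = bar (succHom r n g) := by
  refine Prod.ext rfl (funext fun i => ?_)
  change (Fin.cons 0 (-g.2) : Fin (n + 1) → ZMod r) i = -(Fin.cons 0 g.2 : Fin (n + 1) → ZMod r) i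
  cases i using Fin.cases <;> simp

theorem exists_succHom_eq {h : Wreath r (n + 1)} (h₁ : h.1 0 = 0) (h₂ : h.2 0 = 0) :
    ∃ g, succHom r n g = h := by
  obtain ⟨⟨p, σ⟩, hσ⟩ := Perm.decomposeFin.symm.surjective h.1
  obtain rfl : p = 0 := by rw [← h₁, ← hσ, Perm.decomposeFin_symm_apply_zero]
  have cons_tail : Fin.cons 0 (Fin.tail h.2) = h.2 := by rw [← h₂, Fin.cons_self_tail]
  exact ⟨⟨σ, Fin.tail h.2⟩, Prod.ext hσ cons_tail⟩

instance : Subsingleton (Wreath r 0) :=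
  inferInstanceAs (Subsingleton (Perm (Fin 0) × (Fin 0 → ZMod r)))

theorem alternatingInvariantsVanish (r n : ℕ) [NeZero r] :
    AlternatingInvariantsVanish.{u} ℂ (barAut : Wreath r n ≃* Wreath r n).toMonoidHom := by
  induction n with
  | zero => exact alternatingInvariantsVanish_of_subsingleton _
  | succ n ih =>
    refine ih.of_hom (φ := succHom r n) barAut.bijective succHom_bar fun g => ?_
    obtain ⟨h, hconj, h₁, h₂⟩ := exists_conj_eq_tr g 0
    obtain ⟨l, rfl⟩ := exists_succHom_eq h₁ h₂
    exact ⟨l, hconj⟩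

theorem isConj_bar_inv (g : Wreath r n) : IsConj g (bar g)⁻¹ := by
  cases n with
  | zero => exact Subsingleton.elim g (bar g)⁻¹ ▸ IsConj.refl g
  | succ n =>
    obtain ⟨h, hconj, -⟩ := exists_conj_eq_tr g 0
    exact isConj_iff.2 ⟨h, hconj⟩

end

end Wreath

section CompleteIrrFamilies

open Representation

variable {G ι : Type} [Group G] [Fintype G] {V : ι → FDRep ℂ G}

namespace IsCompleteIrrFamily

open scoped Classical in
theorem inv_card_mul_sum_character_mul_character_inv (hV : IsCompleteIrrFamily V) (i j : ι) :
    (Nat.card G : ℂ)⁻¹ * ∑ g, (V i).character g * (V j).character g⁻¹ = if i = j then 1 else 0 := by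
  have := invertibleOfNonzero (NeZero.ne (Nat.card G : ℂ))
  have := hV.1 i
  have := hV.1 j
  have iso_iff : Nonempty (V i ≅ V j) ↔ i = j := ⟨hV.2.1 i j, fun h => h ▸ ⟨Iso.refl _⟩⟩
  simpa only [iso_iff] using FDRep.char_orthonormal (V i) (V j)

variable [Fintype ι]

theorem apply_eq_sum_character (hV : IsCompleteIrrFamily V) {f : G → ℂ}
    (hf : ∀ g h, f (h * g * h⁻¹) = f g) (g : G) :
    f g = ∑ i, ((Nat.card G : ℂ)⁻¹ * ∑ h, f h * (V i).character h⁻¹) * (V i).character g := by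
  classical
  let c (i : ι) : ℂ := (Nat.card G : ℂ)⁻¹ * ∑ h, f h * (V i).character h⁻¹
  suffices h : (fun g => f g - ∑ i, c i * (V i).character g) = 0 from sub_eq_zero.1 (congrFun h g)
  refine classFunction_eq_zero (fun g h => ?_) fun W _ _ _ σ _ => ?_
  · simp only [hf, FDRep.char_conj]
  obtain ⟨j, ⟨e⟩⟩ := hV.2.2 (FDRep.of σ) ((simple_iff_isIrreducible _).2 ‹_›)
  have char_eq : σ.character = (V j).character := (FDRep.char_iso e).symm
  have card_ne_zero : (Nat.card G : ℂ)⁻¹ ≠ 0 := inv_ne_zero (NeZero.ne _)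
  rw [← mul_right_inj' card_ne_zero, mul_zero]
  calc (Nat.card G : ℂ)⁻¹ * ∑ g, (f g - ∑ i, c i * (V i).character g) * σ.character g⁻¹
      = (Nat.card G : ℂ)⁻¹ * ∑ g, f g * (V j).character g⁻¹ -
          ∑ i, c i * ((Nat.card G : ℂ)⁻¹ * ∑ g, (V i).character g * (V j).character g⁻¹) := by
        simp only [char_eq, sub_mul, sum_sub_distrib, mul_sub, sum_mul, mul_sum, mul_assoc]
        rw [sum_comm]
        simp only [mul_left_comm (c _)]
    _ = c j - c j := by
        simp only [hV.inv_card_mul_sum_character_mul_character_inv, mul_ite, mul_one, mul_zero,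
          sum_ite_eq', mem_univ, if_true, c]
    _ = 0 := sub_self (c j)

theorem card_twistedRoots_eq_sum (hV : IsCompleteIrrFamily V) {τ : G →* G}
    (hτ : Function.Involutive τ) (g : G) :
    (Nat.card {v : G // v * τ v = g} : ℂ) =
      ∑ i, twistedIndicator τ (V i).ρ * (V i).character g := by
  classical
  let N (g : G) : ℂ := Nat.card {v : G // v * τ v = g}
  have N_conj (g h : G) : N (h * g * h⁻¹) = N g := by
    let e : G ≃ G := (Equiv.mulLeft h).trans (Equiv.mulRight (τ h)⁻¹)
    have e_mul (v : G) : e v * τ (e v) = h * (v * τ v) * h⁻¹ := by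
      simp [e, mul_assoc, hτ h]
    refine congrArg Nat.cast (Nat.card_congr (e.subtypeEquiv fun v => ?_)).symm
    rw [e_mul, mul_left_inj, mul_right_inj]
  have coefficient (χ : G → ℂ) : ∑ h, N h * χ h⁻¹ = ∑ v, χ (v * τ v)⁻¹ := by
    rw [← Fintype.sum_fiberwise' (fun v => v * τ v) fun h => χ h⁻¹]
    simp only [N, Nat.card_eq_fintype_card, sum_const, card_univ, nsmul_eq_mul]
  have inverse (i : ι) : ∑ v, (V i).character (v * τ v)⁻¹ = ∑ u, (V i).character (u * τ u) := by
    refine Fintype.sum_equiv (Equiv.inv G) _ _ fun v => ?_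
    rw [Equiv.inv_apply, map_inv, mul_inv_rev, FDRep.char_mul_comm]
  calc N g = _ := hV.apply_eq_sum_character N_conj g
    _ = ∑ i, twistedIndicator τ (V i).ρ * (V i).character g := by
      simp only [coefficient, inverse]
      rfl

end IsCompleteIrrFamily

end CompleteIrrFamilies

/-- **A Gelfand model for wreath products, character formula** (Theorem `t.main`):
for every `g ∈ G(r,n) = ℤ_r ≀ S_n`, the sum of all irreducible complex characters of
`G(r,n)` at `g` equals the number of absolute square roots of `g`, i.e. the number of
`v` with `v · v̄ = g`. -/
theorem char_sum_eq_card_absolute_square_roots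
    (r n : ℕ) [NeZero r] (hn : 0 < n)
    {ι : Type} [Fintype ι] (V : ι → FDRep ℂ (Wreath r n))
    (hV : IsCompleteIrrFamily V) (g : Wreath r n) :
    ∑ i, (V i).character g =
      (Nat.card {v : Wreath r n // v * Wreath.bar v = g} : ℂ) := by
  have indicator (i : ι) : twistedIndicator Wreath.barAut.toMonoidHom (V i).ρ = 1 := by
    have := (simple_iff_isIrreducible (V i)).1 (hV.1 i)
    exact twistedIndicator_eq_one (τ := Wreath.barAut.toMonoidHom) Wreath.bar_bar
      Wreath.isConj_bar_inv (Wreath.alternatingInvariantsVanish r n) (V i).ρ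
  have card_roots :=
    hV.card_twistedRoots_eq_sum (τ := Wreath.barAut.toMonoidHom) Wreath.bar_bar g
  simp only [indicator, one_mul] at card_roots
  exact card_roots.symm
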